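/- Let α and β be LIF expressions such that O^syn(β) ∩ I^syn(β) = ∅. Then the LIF expression α ; β is equivalent to the LIF expression cyl^r_{O^syn(β)}(α) ∩ cyl^l_{O^syn(α)}(β). -/

import Mathlib

/-- A binary relation on valuations (BRV). -/
abbrev BRV (V dom : Type*) := Set ((V → dom) × (V → dom))

namespace BRV

variable {V dom : Type*}

/-- `ν1` and `ν2` agree on the set `Y` of variables. -/
def AgreeOn (ν1 ν2 : V → dom) (Y : Set V) : Prop := ∀ y ∈ Y, ν1 y = ν2 y

/-- Composition of BRVs. -/
def comp (A B : BRV V dom) : BRV V dom :=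
  {p | ∃ ν3, (p.1, ν3) ∈ A ∧ (ν3, p.2) ∈ B}

/-- Left cylindrification. -/
def cyll (Z : Set V) (A : BRV V dom) : BRV V dom :=
  {p | ∃ ν1', (ν1', p.2) ∈ A ∧ AgreeOn ν1' p.1 Zᶜ}

/-- Right cylindrification. -/
def cylr (Z : Set V) (A : BRV V dom) : BRV V dom :=
  {p | ∃ ν2', (p.1, ν2') ∈ A ∧ AgreeOn ν2' p.2 Zᶜ}

/-- Left selection. -/
def sell (x y : V) (A : BRV V dom) : BRV V dom := {p ∈ A | p.1 x = p.1 y}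

/-- Right selection. -/
def selr (x y : V) (A : BRV V dom) : BRV V dom := {p ∈ A | p.2 x = p.2 y}

/-- Left-to-right selection. -/
def sellr (x y : V) (A : BRV V dom) : BRV V dom := {p ∈ A | p.1 x = p.2 y}


end BRV


/-- A global BRV: a function from interpretations to BRVs.
`I` is the type of interpretations. -/
abbrev GBRV (V dom I : Type*) := I → BRV V dom

/-- Semantic outputs of a global BRV. -/
def Osem {V dom I : Type*} (Q : GBRV V dom I) : Set V :=
  {x | ∃ (D : I) (p : (V → dom) × (V → dom)), p ∈ Q D ∧ p.1 x ≠ p.2 x}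

/-- `X` determines `Q` on `Y`. -/
def Determines {V dom I : Type*} (Q : GBRV V dom I) (X Y : Set V) : Prop :=
  ∀ (D : I), ∀ p ∈ Q D, ∀ ν1' : V → dom, BRV.AgreeOn ν1' p.1 X →
    ∃ ν2' : V → dom, BRV.AgreeOn ν2' p.2 Y ∧ (ν1', ν2') ∈ Q D

/-- Semantic inputs of a global BRV. -/
def Isem {V dom I : Type*} (Q : GBRV V dom I) : Set V :=
  {x | ¬ Determines Q ({x}ᶜ) (Osem Q)}

-- `ν` patched with the `X`-valuation `ν'` (the values of `ν'` outside `X` are irrelevant).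
open Classical in
noncomputable def patch {V dom : Type*} (ν ν' : V → dom) (X : Set V) : V → dom :=
  fun v => if v ∈ X then ν' v else ν v

/-- A global BRV is inertially cylindrified on `X`. -/
def InertCyl {V dom I : Type*} (Q : GBRV V dom I) (X : Set V) : Prop :=
  (∀ x ∈ X, x ∉ Osem Q) ∧
  ∀ (D : I), ∀ p ∈ Q D, ∀ ν' : V → dom,
    (patch p.1 ν' X, patch p.2 ν' X) ∈ Q D

/-- A module vocabulary: each module name has an arity and an input arity. -/
structure Vocab (Name : Type*) where
  ar : Name → ℕ
  iar : Name → ℕ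
  iar_le : ∀ M, iar M ≤ ar M

/-- LIF expressions over a module vocabulary. -/
inductive LIF (Name V : Type*) (voc : Vocab Name) : Type _ where
  | idE : LIF Name V voc
  | atom (M : Name) (xs ys : List V)
      (hx : xs.length = voc.iar M) (hy : ys.length = voc.ar M - voc.iar M) :
      LIF Name V voc
  | union (a b : LIF Name V voc) : LIF Name V voc
  | inter (a b : LIF Name V voc) : LIF Name V voc
  | diff  (a b : LIF Name V voc) : LIF Name V voc
  | comp  (a b : LIF Name V voc) : LIF Name V voc
  | cyll (Z : Finset V) (a : LIF Name V voc) : LIF Name V voc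
  | cylr (Z : Finset V) (a : LIF Name V voc) : LIF Name V voc
  | sellr (x y : V) (a : LIF Name V voc) : LIF Name V voc
  | sell (x y : V) (a : LIF Name V voc) : LIF Name V voc
  | selr (x y : V) (a : LIF Name V voc) : LIF Name V voc

/-- An interpretation assigns to each module name a relation over `dom`,
represented as a set of lists. -/
abbrev Interp (Name dom : Type*) := Name → Set (List dom)

namespace LIF

variable {Name V dom : Type*} {voc : Vocab Name}

/-- The semantics of a LIF expression under an interpretation. -/
def sem (D : Interp Name dom) : LIF Name V voc → BRV V dom
  | .idE => {p | p.1 = p.2}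
  | .atom M xs ys _ _ =>
      {p | (xs.map p.1 ++ ys.map p.2) ∈ D M ∧ BRV.AgreeOn p.1 p.2 {v | v ∈ ys}ᶜ}
  | .union a b => a.sem D ∪ b.sem D
  | .inter a b => a.sem D ∩ b.sem D
  | .diff a b  => a.sem D \ b.sem D
  | .comp a b  => BRV.comp (a.sem D) (b.sem D)
  | .cyll Z a  => BRV.cyll (↑Z) (a.sem D)
  | .cylr Z a  => BRV.cylr (↑Z) (a.sem D)
  | .sellr x y a => BRV.sellr x y (a.sem D)
  | .sell x y a  => BRV.sell x y (a.sem D)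
  | .selr x y a  => BRV.selr x y (a.sem D)

/-- The global BRV induced by a LIF expression. -/
def gsem (dom : Type*) (α : LIF Name V voc) : GBRV V dom (Interp Name dom) :=
  fun D => α.sem D

end LIF

namespace LIF

variable {Name V : Type*} {voc : Vocab Name} [DecidableEq V]

/-- Syntactic outputs of a LIF expression. -/
def Osyn : LIF Name V voc → Finset V
  | .idE => ∅
  | .atom _ _ ys _ _ => ys.toFinset
  | .union a b => a.Osyn ∪ b.Osyn
  | .inter a b => a.Osyn ∩ b.Osyn
  | .diff a _  => a.Osyn
  | .comp a b  => a.Osyn ∪ b.Osyn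
  | .cyll Z a  => a.Osyn ∪ Z
  | .cylr Z a  => a.Osyn ∪ Z
  | .sellr x y a => if x = y then a.Osyn \ {x} else a.Osyn
  | .sell _ _ a  => a.Osyn
  | .selr _ _ a  => a.Osyn

/-- Syntactic inputs of a LIF expression. -/
def Isyn : LIF Name V voc → Finset V
  | .idE => ∅
  | .atom _ xs _ _ _ => xs.toFinset
  | .union a b => a.Isyn ∪ b.Isyn ∪ ((a.Osyn \ b.Osyn) ∪ (b.Osyn \ a.Osyn))
  | .inter a b => a.Isyn ∪ b.Isyn ∪ ((a.Osyn \ b.Osyn) ∪ (b.Osyn \ a.Osyn))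
  | .diff a b  => a.Isyn ∪ b.Isyn ∪ ((a.Osyn \ b.Osyn) ∪ (b.Osyn \ a.Osyn))
  | .comp a b  => a.Isyn ∪ (b.Isyn \ a.Osyn)
  | .cyll Z a  => a.Isyn \ Z
  | .cylr _ a  => a.Isyn
  | .sellr x y a =>
      if x = y then (if y ∈ a.Osyn then a.Isyn ∪ {x} else a.Isyn)
      else (if y ∈ a.Osyn then a.Isyn ∪ {x} else a.Isyn ∪ {x, y})
  | .sell x y a => if x = y then a.Isyn else a.Isyn ∪ {x, y}
  | .selr x y a => if x = y then a.Isyn else a.Isyn ∪ ({x, y} \ a.Osyn)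

end LIF

/-!
Changes made by an expression are confined to its syntactic outputs, and the final values of
these are determined by the syntactic inputs. Hence `α ; β` is always contained in the
intersection of the two cylindrifications. Conversely, let `(ν₁, ν₂)` be in the intersection,
witnessed by `(ν₁, ν₃)` in `α` and `(ν₁', ν₂)` in `β`. Off the outputs of `β` the valuations `ν₃`,
`ν₂` and `ν₁'` all agree. When `β` has no input among its outputs, `ν₃` thus agrees with `ν₁'` on
the inputs of `β`, so `(ν₃, ν₂)` is in `β` as well.
-/

namespace BRV

variable {V dom : Type*} {ν₁ ν₂ ν₃ : V → dom} {X Y : Set V}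

theorem AgreeOn.symm (h : AgreeOn ν₁ ν₂ X) : AgreeOn ν₂ ν₁ X := fun y hy => (h y hy).symm

theorem AgreeOn.trans (h₁₂ : AgreeOn ν₁ ν₂ X) (h₂₃ : AgreeOn ν₂ ν₃ X) : AgreeOn ν₁ ν₃ X :=
  fun y hy => (h₁₂ y hy).trans (h₂₃ y hy)

theorem AgreeOn.mono (h : AgreeOn ν₁ ν₂ Y) (hXY : X ⊆ Y) : AgreeOn ν₁ ν₂ X :=
  fun y hy => h y (hXY hy)

theorem agreeOn_union : AgreeOn ν₁ ν₂ (X ∪ Y) ↔ AgreeOn ν₁ ν₂ X ∧ AgreeOn ν₁ ν₂ Y := by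
  simp only [AgreeOn, Set.mem_union, or_imp, forall_and]

theorem agreeOn_patch : AgreeOn (patch ν₁ ν₂ X) ν₂ X := fun _ hy => if_pos hy

theorem agreeOn_patch_compl : AgreeOn (patch ν₁ ν₂ X) ν₁ Xᶜ := fun _ hy => if_neg hy

end BRV

namespace GBRV

open BRV
open scoped symmDiff

variable {V dom ι : Type*}

theorem osem_subset_iff {Q : GBRV V dom ι} {Y : Set V} :
    Osem Q ⊆ Y ↔ ∀ D, ∀ p ∈ Q D, AgreeOn p.1 p.2 Yᶜ := by
  refine ⟨fun h D p hp y hy => ?_, fun h x ⟨D, p, hp, hne⟩ => ?_⟩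
  · by_contra hne
    exact hy (h ⟨D, p, hp, hne⟩)
  · by_contra hx
    exact hne (h D p hp x hx)

/-- `X` and `Y` are sound bounds for the inputs and outputs of `Q`: only variables in `Y` can
change, and their final values depend only on the initial values of the variables in `X`.
This is the invariant that the syntactic inputs and outputs of an expression maintain. -/
structure IsIOBound (Q : GBRV V dom ι) (X Y : Set V) : Prop where
  osem_subset : Osem Q ⊆ Y
  determines : Determines Q X Y

namespace IsIOBound

variable {Q R : GBRV V dom ι} {X X' Y Y' : Set V} {D : ι} {ν₁ ν₂ μ₁ μ₂ : V → dom}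

theorem agreeOn_compl (hQ : IsIOBound Q X Y) (hν : (ν₁, ν₂) ∈ Q D) : AgreeOn ν₁ ν₂ Yᶜ :=
  osem_subset_iff.1 hQ.osem_subset D _ hν

theorem mem_of_agreeOn (hQ : IsIOBound Q X Y) (hν : (ν₁, ν₂) ∈ Q D) (h₁ : AgreeOn μ₁ ν₁ X)
    (h₂ : AgreeOn μ₂ ν₂ Y) (hμ : AgreeOn μ₁ μ₂ Yᶜ) : (μ₁, μ₂) ∈ Q D := by
  obtain ⟨μ, hμν, hmem⟩ := hQ.determines D _ hν μ₁ h₁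
  have hμ₂ : μ = μ₂ := by
    funext y
    by_cases hy : y ∈ Y
    · exact (hμν.trans h₂.symm) y hy
    · exact ((hQ.agreeOn_compl hmem).symm.trans hμ) y hy
  exact hμ₂ ▸ hmem

theorem mem_of_agreeOn_symmDiff (hQ : IsIOBound Q X Y) (hν : (ν₁, ν₂) ∈ Q D)
    (hν' : AgreeOn ν₁ ν₂ Y'ᶜ) (h₁ : AgreeOn μ₁ ν₁ (X ∪ Y' ∆ Y)) (h₂ : AgreeOn μ₂ ν₂ Y')
    (hμ : AgreeOn μ₁ μ₂ Y'ᶜ) : (μ₁, μ₂) ∈ Q D := by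
  have hνY := hQ.agreeOn_compl hν
  have hY : AgreeOn μ₂ ν₂ Y := fun y hy => by grind [AgreeOn]
  have hYc : AgreeOn μ₁ μ₂ Yᶜ := fun y hy => by grind [AgreeOn]
  exact hQ.mem_of_agreeOn hν (agreeOn_union.1 h₁).1 hY hYc

theorem shrink_outputs (hQ : IsIOBound Q X Y) (hY' : Osem Q ⊆ Y') (h : Y' ⊆ Y) :
    IsIOBound Q X Y' where
  osem_subset := hY'
  determines D p hp μ₁ h₁ :=
    let ⟨μ₂, h₂, hμ⟩ := hQ.determines D p hp μ₁ h₁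
    ⟨μ₂, h₂.mono h, hμ⟩

theorem enlarge (hQ : IsIOBound Q X Y) (hX : X ⊆ X') (hY : Y ⊆ Y') (hYX : Y' \ Y ⊆ X') :
    IsIOBound Q X' Y' where
  osem_subset := hQ.osem_subset.trans hY
  determines := by
    rintro D ⟨ν₁, ν₂⟩ hν μ₁ h₁
    obtain ⟨μ₂, h₂, hμ⟩ := hQ.determines D _ hν μ₁ (h₁.mono hX)
    have hν' := hQ.agreeOn_compl hν
    have hμ' := hQ.agreeOn_compl hμ
    exact ⟨μ₂, fun y hy => by grind [AgreeOn], hμ⟩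

theorem sep (hQ : IsIOBound Q X Y) {P : ι → (V → dom) × (V → dom) → Prop}
    (hP : ∀ ⦃D ν₁ ν₂ μ₁ μ₂⦄, P D (ν₁, ν₂) → AgreeOn ν₁ ν₂ Yᶜ → AgreeOn μ₁ ν₁ X' →
      AgreeOn μ₂ ν₂ Y → AgreeOn μ₁ μ₂ Yᶜ → P D (μ₁, μ₂)) :
    IsIOBound (fun D => {p ∈ Q D | P D p}) (X ∪ X') Y where
  osem_subset := osem_subset_iff.2 fun _ _ hp => hQ.agreeOn_compl hp.1
  determines := by
    rintro D ⟨ν₁, ν₂⟩ ⟨hν, hPν⟩ μ₁ h₁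
    obtain ⟨hX, hX'⟩ := agreeOn_union.1 h₁
    obtain ⟨μ₂, h₂, hμ⟩ := hQ.determines D _ hν μ₁ hX
    exact ⟨μ₂, h₂, hμ, hP hPν (hQ.agreeOn_compl hν) hX' h₂ (hQ.agreeOn_compl hμ)⟩

protected theorem id : IsIOBound (fun _ : ι => {p : (V → dom) × (V → dom) | p.1 = p.2}) ∅ ∅ where
  osem_subset := osem_subset_iff.2 fun _ _ hp y _ => congrFun hp y
  determines _ _ _ μ₁ _ := ⟨μ₁, fun _ hy => hy.elim, rfl⟩

theorem union (hQ : IsIOBound Q X Y) (hR : IsIOBound R X' Y') :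
    IsIOBound (fun D => Q D ∪ R D) (X ∪ X' ∪ Y ∆ Y') (Y ∪ Y') := by
  have hQ' : IsIOBound Q (X ∪ X' ∪ Y ∆ Y') (Y ∪ Y') :=
    hQ.enlarge (by grind) (by grind) (by grind)
  have hR' : IsIOBound R (X ∪ X' ∪ Y ∆ Y') (Y ∪ Y') :=
    hR.enlarge (by grind) (by grind) (by grind)
  refine ⟨osem_subset_iff.2 fun D p hp => hp.elim hQ'.agreeOn_compl hR'.agreeOn_compl, ?_⟩
  rintro D p (hp | hp) μ₁ h₁
  · obtain ⟨μ₂, h₂, hμ⟩ := hQ'.determines D p hp μ₁ h₁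
    exact ⟨μ₂, h₂, .inl hμ⟩
  · obtain ⟨μ₂, h₂, hμ⟩ := hR'.determines D p hp μ₁ h₁
    exact ⟨μ₂, h₂, .inr hμ⟩

theorem inter (hQ : IsIOBound Q X Y) (hR : IsIOBound R X' Y') :
    IsIOBound (fun D => Q D ∩ R D) (X ∪ X' ∪ Y ∆ Y') (Y ∩ Y') := by
  have h : IsIOBound (fun D => Q D ∩ R D) (X ∪ (X' ∪ Y ∆ Y')) Y :=
    hQ.sep fun _ _ _ _ _ => hR.mem_of_agreeOn_symmDiff
  rw [Set.union_assoc]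
  refine h.shrink_outputs (osem_subset_iff.2 fun D p hp => ?_) Set.inter_subset_left
  rw [Set.compl_inter, agreeOn_union]
  exact ⟨hQ.agreeOn_compl hp.1, hR.agreeOn_compl hp.2⟩

theorem diff (hQ : IsIOBound Q X Y) (hR : IsIOBound R X' Y') :
    IsIOBound (fun D => Q D \ R D) (X ∪ X' ∪ Y ∆ Y') Y := by
  rw [Set.union_assoc]
  exact hQ.sep fun _ _ _ _ _ hν hν' h₁ h₂ hμ' hμ =>
    hν (hR.mem_of_agreeOn_symmDiff hμ hμ' h₁.symm h₂.symm hν')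

theorem comp (hQ : IsIOBound Q X Y) (hR : IsIOBound R X' Y') :
    IsIOBound (fun D => (Q D).comp (R D)) (X ∪ X' \ Y) (Y ∪ Y') where
  osem_subset := osem_subset_iff.2 <| by
    rintro D ⟨ν₁, ν₂⟩ ⟨ν₃, h₁₃, h₃₂⟩
    rw [Set.compl_union]
    exact ((hQ.agreeOn_compl h₁₃).mono Set.inter_subset_left).trans
      ((hR.agreeOn_compl h₃₂).mono Set.inter_subset_right)
  determines := by
    rintro D ⟨ν₁, ν₂⟩ ⟨ν₃, h₁₃, h₃₂⟩ μ₁ h₁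
    obtain ⟨μ₃, h₃, hμ₁₃⟩ := hQ.determines D _ h₁₃ μ₁ (agreeOn_union.1 h₁).1
    have hνY := hQ.agreeOn_compl h₁₃
    have hμY := hQ.agreeOn_compl hμ₁₃
    have h₃X' : AgreeOn μ₃ ν₃ X' := fun y hy => by grind [AgreeOn]
    obtain ⟨μ₂, h₂, hμ₃₂⟩ := hR.determines D _ h₃₂ μ₃ h₃X'
    have hνY' := hR.agreeOn_compl h₃₂
    have hμY' := hR.agreeOn_compl hμ₃₂
    exact ⟨μ₂, fun y hy => by grind [AgreeOn], μ₃, hμ₁₃, hμ₃₂⟩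

theorem cyll (hQ : IsIOBound Q X Y) (Z : Set V) :
    IsIOBound (fun D => (Q D).cyll Z) (X \ Z) (Y ∪ Z) where
  osem_subset := osem_subset_iff.2 <| by
    rintro D ⟨ν₁, ν₂⟩ ⟨ν₁', hν, hZ⟩
    rw [Set.compl_union]
    exact (hZ.symm.mono Set.inter_subset_right).trans
      ((hQ.agreeOn_compl hν).mono Set.inter_subset_left)
  determines := by
    rintro D ⟨ν₁, ν₂⟩ ⟨ν₁', hν, hZ⟩ μ₁ h₁
    have hin : AgreeOn (patch μ₁ ν₁' Z) ν₁' Z := agreeOn_patch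
    have hout : AgreeOn (patch μ₁ ν₁' Z) μ₁ Zᶜ := agreeOn_patch_compl
    have hX : AgreeOn (patch μ₁ ν₁' Z) ν₁' X := fun y hy => by grind [AgreeOn]
    obtain ⟨μ₂, h₂, hμ⟩ := hQ.determines D _ hν _ hX
    have hνY := hQ.agreeOn_compl hν
    have hμY := hQ.agreeOn_compl hμ
    exact ⟨μ₂, fun y hy => by grind [AgreeOn], patch μ₁ ν₁' Z, hμ, hout⟩

theorem cylr (hQ : IsIOBound Q X Y) (Z : Set V) :
    IsIOBound (fun D => (Q D).cylr Z) X (Y ∪ Z) where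
  osem_subset := osem_subset_iff.2 <| by
    rintro D ⟨ν₁, ν₂⟩ ⟨ν₂', hν, hZ⟩
    rw [Set.compl_union]
    exact ((hQ.agreeOn_compl hν).mono Set.inter_subset_left).trans
      (hZ.mono Set.inter_subset_right)
  determines := by
    rintro D ⟨ν₁, ν₂⟩ ⟨ν₂', hν, hZ⟩ μ₁ h₁
    obtain ⟨μ₂', h₂, hμ⟩ := hQ.determines D _ hν μ₁ h₁
    have hin : AgreeOn (patch μ₂' ν₂ Z) ν₂ Z := agreeOn_patch
    have hout : AgreeOn (patch μ₂' ν₂ Z) μ₂' Zᶜ := agreeOn_patch_compl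
    exact ⟨patch μ₂' ν₂ Z, fun y hy => by grind [AgreeOn], μ₂', hμ, hout.symm⟩

theorem sell (hQ : IsIOBound Q X Y) (x y : V) :
    IsIOBound (fun D => (Q D).sell x y) (X ∪ {x, y}) Y :=
  hQ.sep fun _ ν₁ ν₂ μ₁ μ₂ (hν : ν₁ x = ν₁ y) _ h₁ _ _ => show μ₁ x = μ₁ y by grind [AgreeOn]

theorem selr (hQ : IsIOBound Q X Y) (x y : V) :
    IsIOBound (fun D => (Q D).selr x y) (X ∪ {x, y} \ Y) Y :=
  hQ.sep fun _ ν₁ ν₂ μ₁ μ₂ (hν : ν₂ x = ν₂ y) _ h₁ h₂ _ => show μ₂ x = μ₂ y by grind [AgreeOn]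

theorem sellr (hQ : IsIOBound Q X Y) (x y : V) :
    IsIOBound (fun D => (Q D).sellr x y) (X ∪ ({x} ∪ {y} \ Y)) Y :=
  hQ.sep fun _ ν₁ ν₂ μ₁ μ₂ (hν : ν₁ x = ν₂ y) _ h₁ h₂ _ => show μ₁ x = μ₂ y by grind [AgreeOn]

theorem sellr_self (hQ : IsIOBound Q X Y) (x : V) :
    IsIOBound (fun D => (Q D).sellr x x) (X ∪ {x} ∩ Y) (Y \ {x}) := by
  have h : IsIOBound (fun D => (Q D).sellr x x) (X ∪ {x} ∩ Y) Y :=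
    hQ.sep fun _ ν₁ ν₂ μ₁ μ₂ (hν : ν₁ x = ν₂ x) _ h₁ h₂ _ => show μ₁ x = μ₂ x by grind [AgreeOn]
  refine h.shrink_outputs (osem_subset_iff.2 fun D p hp => ?_) Set.sdiff_subset
  rw [Set.compl_sdiff, agreeOn_union]
  exact ⟨fun _ hy => hy ▸ hp.2, hQ.agreeOn_compl hp.1⟩

theorem mem_of_agreeOn_compl (hR : IsIOBound R X Y) (hXY : Disjoint Y X) (hν : (ν₁, ν₂) ∈ R D)
    (hμ : AgreeOn μ₁ ν₂ Yᶜ) : (μ₁, ν₂) ∈ R D := by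
  have hμν : AgreeOn μ₁ ν₁ Yᶜ := hμ.trans (hR.agreeOn_compl hν).symm
  exact hR.mem_of_agreeOn hν (hμν.mono hXY.subset_compl_left) (fun _ _ => rfl) hμ

theorem comp_eq_cylr_inter_cyll {Z : Set V} (hQ : Osem Q ⊆ Z) (hR : IsIOBound R X Y)
    (hXY : Disjoint Y X) (D : ι) :
    (Q D).comp (R D) = (Q D).cylr Y ∩ (R D).cyll Z := by
  ext ⟨ν₁, ν₂⟩
  constructor
  · rintro ⟨ν₃, h₁₃, h₃₂⟩
    have hZ : AgreeOn ν₁ ν₃ Zᶜ := osem_subset_iff.1 hQ D _ h₁₃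
    exact ⟨⟨ν₃, h₁₃, hR.agreeOn_compl h₃₂⟩, ⟨ν₃, h₃₂, hZ.symm⟩⟩
  · rintro ⟨⟨ν₃, h₁₃, h₃₂⟩, ⟨ν₁', hν, -⟩⟩
    exact ⟨ν₃, h₁₃, hR.mem_of_agreeOn_compl hXY hν h₃₂⟩

end IsIOBound

end GBRV

namespace LIF

open BRV GBRV

variable {Name V : Type*} {voc : Vocab Name}

theorem isIOBound_gsem_atom (dom : Type*) (M : Name) (xs ys : List V)
    (hx : xs.length = voc.iar M) (hy : ys.length = voc.ar M - voc.iar M) :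
    IsIOBound (gsem dom (atom (voc := voc) M xs ys hx hy)) {v | v ∈ xs} {v | v ∈ ys} where
  osem_subset := osem_subset_iff.2 fun _ _ hp => hp.2
  determines := by
    rintro D ⟨ν₁, ν₂⟩ ⟨hmem, -⟩ μ₁ h₁
    have h₂ : AgreeOn (patch μ₁ ν₂ {v | v ∈ ys}) ν₂ {v | v ∈ ys} := agreeOn_patch
    refine ⟨patch μ₁ ν₂ {v | v ∈ ys}, h₂, ?_, agreeOn_patch_compl.symm⟩
    rwa [List.map_congr_left h₁, List.map_congr_left h₂]

theorem isIOBound_gsem [DecidableEq V] (dom : Type*) (α : LIF Name V voc) :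
    IsIOBound (gsem dom α) α.Isyn α.Osyn := by
  change IsIOBound (fun D => α.sem D) _ _
  induction α with
  | idE => simpa [sem, Isyn, Osyn] using IsIOBound.id
  | atom M xs ys hx hy =>
    simp only [Isyn, Osyn, List.coe_toFinset]
    exact isIOBound_gsem_atom dom M xs ys hx hy
  | union a b iha ihb =>
    simpa [sem, Isyn, Osyn, Set.symmDiff_def, Set.union_assoc] using iha.union ihb
  | inter a b iha ihb =>
    simpa [sem, Isyn, Osyn, Set.symmDiff_def, Set.union_assoc] using iha.inter ihb
  | diff a b iha ihb =>
    simpa [sem, Isyn, Osyn, Set.symmDiff_def, Set.union_assoc] using iha.diff ihb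
  | comp a b iha ihb => simpa [sem, Isyn, Osyn] using iha.comp ihb
  | cyll Z a iha => simpa [sem, Isyn, Osyn] using iha.cyll Z
  | cylr Z a iha => simpa [sem, Isyn, Osyn] using iha.cylr Z
  | sellr x y a iha =>
    obtain rfl | hxy := eq_or_ne x y
    · by_cases hx : x ∈ a.Osyn <;> simpa [sem, Isyn, Osyn, hx] using iha.sellr_self x
    · have hXY := iha.sellr x y
      by_cases hy : y ∈ a.Osyn
      · have hdiff : ({y} : Set V) \ a.Osyn = ∅ := by simpa [Set.sdiff_eq_empty] using hy
        simpa [sem, Isyn, Osyn, hxy, hy, hdiff] using hXY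
      · have hdiff : ({y} : Set V) \ a.Osyn = {y} := by simpa using hy
        simpa [sem, Isyn, Osyn, hxy, hy, hdiff, Set.insert_comm] using hXY
  | sell x y a iha =>
    obtain rfl | hxy := eq_or_ne x y
    · simpa [sem, BRV.sell, Isyn, Osyn] using iha
    · simpa [sem, Isyn, Osyn, hxy] using iha.sell x y
  | selr x y a iha =>
    obtain rfl | hxy := eq_or_ne x y
    · simpa [sem, BRV.selr, Isyn, Osyn] using iha
    · simpa [sem, Isyn, Osyn, hxy] using iha.selr x y

end LIF

theorem stmt14_general {Name V : Type*} {voc : Vocab Name} [DecidableEq V] {dom : Type*}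
    (α β : LIF Name V voc) (h : β.Osyn ∩ β.Isyn = ∅) (D : Interp Name dom) :
    (LIF.comp α β).sem D =
      (LIF.inter (LIF.cylr β.Osyn α) (LIF.cyll α.Osyn β)).sem D := by
  have hdisj : Disjoint (β.Osyn : Set V) β.Isyn :=
    Finset.disjoint_coe.2 (Finset.disjoint_iff_inter_eq_empty.2 h)
  exact GBRV.IsIOBound.comp_eq_cylr_inter_cyll (LIF.isIOBound_gsem dom α).osem_subset
    (LIF.isIOBound_gsem dom β) hdisj D

theorem stmt14 {Name V : Type*} [Nonempty Name] {voc : Vocab Name} [DecidableEq V]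
    (dom : Type*) [Countable dom] [Infinite dom]
    (α β : LIF Name V voc)
    (h : β.Osyn ∩ β.Isyn = ∅) :
    ∀ D : Interp Name dom,
      (LIF.comp α β).sem D =
        (LIF.inter (LIF.cylr β.Osyn α) (LIF.cyll α.Osyn β)).sem D :=
  stmt14_general α β h
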